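/- Let f, g ∈ H²(𝔻²) with f(0) ≠ 0 and g(0) ≠ 0, and let n ≥ 0. If ⟨χ_j f, χ_k f⟩ = ⟨χ_j g, χ_k g⟩ for all 0 ≤ j, k ≤ n, then there exists a complex constant c such that p_n*[f] = c · p_n*[g]. -/

import Mathlib

noncomputable section

open Finset

/-- Coefficients of a formal power series in two variables `z, w`
(the coefficient of `z^j w^k` is the value at `(j, k)`). -/
abbrev Coef := ℕ × ℕ → ℂ

/-- Coefficients of a formal power series in one variable. -/
abbrev Coef1 := ℕ → ℂ

/-- Membership in the Hardy space `H²(𝔻²)`: square-summable coefficients. -/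
def MemH2 (f : Coef) : Prop := Summable (fun jk : ℕ × ℕ => ‖f jk‖ ^ 2)

/-- Membership in the Hardy space `H²(𝔻)`. -/
def MemH2₁ (f : Coef1) : Prop := Summable (fun j : ℕ => ‖f j‖ ^ 2)

/-- The `H²(𝔻²)` inner product `⟨f, g⟩ = ∑ a_{jk} conj (b_{jk})`. -/
def Hinner (f g : Coef) : ℂ := ∑' jk : ℕ × ℕ, f jk * (starRingEnd ℂ) (g jk)

/-- The `H²(𝔻²)` norm. -/
def Hnorm (f : Coef) : ℝ := Real.sqrt (∑' jk : ℕ × ℕ, ‖f jk‖ ^ 2)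

/-- The `H²(𝔻)` norm. -/
def Hnorm1 (f : Coef1) : ℝ := Real.sqrt (∑' j : ℕ, ‖f j‖ ^ 2)

/-- The constant function `1` as an element of `H²(𝔻²)`. -/
def oneH : Coef := fun jk => if jk = (0, 0) then 1 else 0

/-- The constant function `1` as an element of `H²(𝔻)`. -/
def oneH1 : Coef1 := fun j => if j = 0 then 1 else 0

/-- Cauchy product `q·f` of two formal power series in two variables
(used for multiplication of `f ∈ H²(𝔻²)` by a polynomial `q`). -/
def pmul (q f : Coef) : Coef := fun jk =>
  ∑ a ∈ range (jk.1 + 1), ∑ b ∈ range (jk.2 + 1), q (a, b) * f (jk.1 - a, jk.2 - b)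

/-- Multiplication of a one-variable power series by a one-variable polynomial. -/
def pmul1 (q : Polynomial ℂ) (f : Coef1) : Coef1 := fun j =>
  ∑ a ∈ range (j + 1), q.coeff a * f (j - a)

/-- Degree-lexicographic enumeration of the monomials in `z, w`:
`chi 0 = (0,0) ↔ 1`, `chi 1 = (1,0) ↔ z`, `chi 2 = (0,1) ↔ w`,
`chi 3 = (2,0) ↔ z²`, `chi 4 = (1,1) ↔ zw`, `chi 5 = (0,2) ↔ w²`, … -/
def chi : ℕ → ℕ × ℕ
  | 0 => (0, 0)
  | n + 1 =>
    let p := chi n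
    if p.1 = 0 then (p.2 + 1, 0) else (p.1 - 1, p.2 + 1)

/-- The monomial `z^(ab.1) w^(ab.2)` as a coefficient function. -/
def mono (ab : ℕ × ℕ) : Coef := fun jk => if jk = ab then 1 else 0

/-- `p` lies in `P_n = span {χ_0, …, χ_n}`. -/
def inPn (n : ℕ) (p : Coef) : Prop := ∀ ab, p ab ≠ 0 → ∃ k ≤ n, chi k = ab

/-- `p` is a (two-variable) polynomial: finitely many nonzero coefficients. -/
def IsPoly2 (p : Coef) : Prop := (Function.support p).Finite

/-- Evaluation of a power series at the point `(z, w)`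
(absolutely convergent for `f ∈ H²(𝔻²)` and `(z,w)` in the open bidisk,
and for any polynomial at any point). -/
def heval (f : Coef) (z w : ℂ) : ℂ := ∑' jk : ℕ × ℕ, f jk * z ^ jk.1 * w ^ jk.2

/-- `p` is the `n`-th optimal polynomial approximant to `1/f`:
`p ∈ P_n` and `p` minimizes `‖qf - 1‖` over `q ∈ P_n`. -/
def IsOPA (f : Coef) (n : ℕ) (p : Coef) : Prop :=
  inPn n p ∧ ∀ q : Coef, inPn n q →
    Hnorm (pmul p f - oneH) ≤ Hnorm (pmul q f - oneH)

/-- `q` has bidegree `(N, M)`: degree `N` in `z` and degree `M` in `w`. -/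
def HasBidegree (q : Coef) (N M : ℕ) : Prop :=
  (∀ a b : ℕ, q (a, b) ≠ 0 → a ≤ N ∧ b ≤ M) ∧ (∃ b, q (N, b) ≠ 0) ∧ (∃ a, q (a, M) ≠ 0)

/-- Reflection of a polynomial of bidegree `(N, M)`:
the coefficient of `z^j w^k` is `conj` of the coefficient of `z^(N-j) w^(M-k)`. -/
def reflPoly (N M : ℕ) (q : Coef) : Coef := fun jk =>
  if jk.1 ≤ N ∧ jk.2 ≤ M then (starRingEnd ℂ) (q (N - jk.1, M - jk.2)) else 0

/-- The degree-lexicographic index of the monomial `z^(ab.1) w^(ab.2)`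
(the inverse of `chi`). -/
def lexIndex (ab : ℕ × ℕ) : ℕ := (ab.1 + ab.2) * (ab.1 + ab.2 + 1) / 2 + ab.2

/-- `pound k j` = the degree-lexicographic index `£(k,j)` of the monomial `(χ_k)^j`. -/
def pound (k j : ℕ) : ℕ := lexIndex (j * (chi k).1, j * (chi k).2)

/-- The linear factor `z - α` as a coefficient function. -/
def linZ (α : ℂ) : Coef := fun jk => if jk = (1, 0) then 1 else if jk = (0, 0) then -α else 0

/-- The linear factor `w - β` as a coefficient function. -/
def linW (β : ℂ) : Coef := fun jk => if jk = (0, 1) then 1 else if jk = (0, 0) then -β else 0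

/-!
`p` is the `n`-th OPA to `1/f` exactly when `p f` is the best approximation of `1` in the span of
`χ_0 f, …, χ_n f`, that is, when `⟨p f, χ_k f⟩ = ⟨1, χ_k f⟩` for all `k ≤ n`. In coordinates this is
a linear system whose matrix is the Gram matrix of the `χ_k f` and whose right-hand side
`⟨1, χ_k f⟩ = conj (f(0) χ_k(0))` is `conj f(0)` times a vector independent of `f`. If `f` and `g`
share the Gram matrix, then `r = conj g(0) p - conj f(0) q` solves the homogeneous system, so `r f`
is orthogonal to itself. Hence `r f = 0`, and `r g = 0` by symmetry. Power series have no zero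
divisors, so `r = 0` or `f = g = 0`, and `r = 0` in the latter case too.
-/

section BestApproximation

variable {𝕜 E F ι : Type*} [RCLike 𝕜]
  [NormedAddCommGroup E] [InnerProductSpace 𝕜 E] [NormedAddCommGroup F] [InnerProductSpace 𝕜 F]

lemma inner_eq_inner_of_forall_norm_sub_le {K : Submodule 𝕜 E} {u e : E} (hu : u ∈ K)
    (hmin : ∀ v ∈ K, ‖e - u‖ ≤ ‖e - v‖) {v : E} (hv : v ∈ K) : inner 𝕜 v u = inner 𝕜 v e := by
  have hinf : ‖e - u‖ = ⨅ v : K, ‖e - v‖ :=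
    le_antisymm (le_ciInf fun v => hmin v v.2)
      (ciInf_le ⟨0, Set.forall_mem_range.2 fun _ => norm_nonneg _⟩ (⟨u, hu⟩ : K))
  have horth : inner 𝕜 (e - u) v = 0 := (K.norm_eq_iInf_iff_inner_eq_zero hu).1 hinf v hv
  rw [inner_eq_zero_symm, inner_sub_right, sub_eq_zero] at horth
  exact horth.symm

lemma inner_sum_smul_eq_inner_of_forall_norm_sub_le {s : Finset ι} {x : ι → E} {e : E}
    {p : ι → 𝕜} (hmin : ∀ c : ι → 𝕜, ‖e - ∑ i ∈ s, p i • x i‖ ≤ ‖e - ∑ i ∈ s, c i • x i‖)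
    {i : ι} (hi : i ∈ s) : inner 𝕜 (x i) (∑ j ∈ s, p j • x j) = inner 𝕜 (x i) e := by
  refine inner_eq_inner_of_forall_norm_sub_le (K := Submodule.span 𝕜 (x '' s)) ?_ ?_
    (Submodule.subset_span (Set.mem_image_of_mem x hi))
  · exact Submodule.sum_smul_mem _ p fun j hj =>
      Submodule.subset_span (Set.mem_image_of_mem x hj)
  · intro v hv
    obtain ⟨c, rfl⟩ := (Submodule.mem_span_image_finset_iff_exists_fun' 𝕜).1 hv
    exact hmin c

lemma sum_smul_eq_zero_of_inner_eq_zero {s : Finset ι} {x : ι → E} {c : ι → 𝕜}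
    (h : ∀ i ∈ s, inner 𝕜 (x i) (∑ j ∈ s, c j • x j) = 0) : ∑ j ∈ s, c j • x j = 0 := by
  rw [← inner_self_eq_zero (𝕜 := 𝕜), sum_inner]
  exact Finset.sum_eq_zero fun i hi => by rw [inner_smul_left, h i hi, mul_zero]

lemma inner_sum_smul_eq_of_inner_eq {s : Finset ι} {x : ι → E} {y : ι → F}
    (hGram : ∀ i ∈ s, ∀ j ∈ s, inner 𝕜 (x i) (x j) = inner 𝕜 (y i) (y j)) (c : ι → 𝕜)
    {i : ι} (hi : i ∈ s) :
    inner 𝕜 (x i) (∑ j ∈ s, c j • x j) = inner 𝕜 (y i) (∑ j ∈ s, c j • y j) := by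
  simp only [inner_sum, inner_smul_right]
  exact Finset.sum_congr rfl fun j hj => by rw [hGram i hi j hj]

end BestApproximation

section CauchyProduct

/-- The series `f` as a power series in `z` whose coefficients are power series in `w`, so that
`pmul` becomes the multiplication of a domain. -/
def toPowerSeries (f : Coef) : PowerSeries (PowerSeries ℂ) :=
  PowerSeries.mk fun j => PowerSeries.mk fun k => f (j, k)

lemma toPowerSeries_eq_zero_iff {f : Coef} : toPowerSeries f = 0 ↔ f = 0 := by
  simp [toPowerSeries, PowerSeries.ext_iff, funext_iff]

lemma toPowerSeries_pmul (p f : Coef) :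
    toPowerSeries (pmul p f) = toPowerSeries p * toPowerSeries f := by
  ext j k
  simp [toPowerSeries, pmul, PowerSeries.coeff_mul, map_sum,
    Finset.Nat.sum_antidiagonal_eq_sum_range_succ_mk]

lemma pmul_eq_zero_iff {p f : Coef} : pmul p f = 0 ↔ p = 0 ∨ f = 0 := by
  rw [← toPowerSeries_eq_zero_iff, toPowerSeries_pmul, mul_eq_zero, toPowerSeries_eq_zero_iff,
    toPowerSeries_eq_zero_iff]

lemma pmul_apply_zero (p f : Coef) : pmul p f (0, 0) = p (0, 0) * f (0, 0) := by
  simp [pmul]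

lemma pmul_sum_smul {ι : Type*} (s : Finset ι) (c : ι → ℂ) (r : ι → Coef) (f : Coef) :
    pmul (∑ i ∈ s, c i • r i) f = ∑ i ∈ s, c i • pmul (r i) f := by
  ext jk
  simp only [pmul, Finset.sum_apply, Pi.smul_apply, smul_eq_mul, Finset.sum_mul, Finset.mul_sum,
    mul_assoc]
  rw [Finset.sum_comm (s := s)]
  exact Finset.sum_congr rfl fun a _ => by rw [Finset.sum_comm]

lemma pmul_mono_apply (ab jk : ℕ × ℕ) (f : Coef) :
    pmul (mono ab) f jk = if ab ≤ jk then f (jk - ab) else 0 := by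
  obtain ⟨a, b⟩ := ab
  obtain ⟨j, k⟩ := jk
  simp [pmul, mono, ite_and, Finset.sum_ite_irrel]

lemma sum_smul_mono {s : Finset (ℕ × ℕ)} {p : Coef} (hp : Function.support p ⊆ s) :
    ∑ ab ∈ s, p ab • mono ab = p := by
  ext jk
  have hout : jk ∉ s → p jk = 0 := fun h => by_contra fun h0 => h (hp h0)
  simpa [mono, eq_comm] using hout

lemma pmul_eq_sum_smul_pmul_mono {s : Finset (ℕ × ℕ)} {p : Coef} (hp : Function.support p ⊆ s)
    (f : Coef) : pmul p f = ∑ ab ∈ s, p ab • pmul (mono ab) f := by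
  rw [← pmul_sum_smul, sum_smul_mono hp]

end CauchyProduct

section Monomials

/-- The exponents of the monomials `χ_0, …, χ_n` spanning `P_n`. -/
def chiFinset (n : ℕ) : Finset (ℕ × ℕ) := (Finset.Iic n).image chi

lemma mem_chiFinset {n : ℕ} {ab : ℕ × ℕ} : ab ∈ chiFinset n ↔ ∃ k ≤ n, chi k = ab := by
  simp [chiFinset]

lemma inPn_iff_support_subset {n : ℕ} {p : Coef} :
    inPn n p ↔ Function.support p ⊆ chiFinset n := by
  simp [inPn, Set.subset_def, mem_chiFinset]

end Monomials

section HardySpace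

/-- `H²(𝔻²)` as a Hilbert space: the square-summable coefficient families. -/
abbrev HardySpace := lp (fun _ : ℕ × ℕ => ℂ) 2

lemma memH2_iff_memℓp {f : Coef} : MemH2 f ↔ Memℓp (E := fun _ : ℕ × ℕ => ℂ) f 2 := by
  simp [MemH2, memℓp_gen_iff]

lemma HardySpace.norm_eq_Hnorm (x : HardySpace) : ‖x‖ = Hnorm x := by
  simp [lp.norm_eq_tsum_rpow, Hnorm, Real.sqrt_eq_rpow]

lemma HardySpace.inner_eq_Hinner (x y : HardySpace) : inner ℂ x y = Hinner y x :=
  lp.inner_eq_tsum x y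

lemma MemH2.pmul_mono {f : Coef} (hf : MemH2 f) (ab : ℕ × ℕ) : MemH2 (pmul (mono ab) f) := by
  refine ((add_left_injective ab).summable_iff fun jk hjk => ?_).1 ?_
  · have hle : ¬ab ≤ jk := fun h => hjk ⟨jk - ab, tsub_add_cancel_of_le h⟩
    simp [pmul_mono_apply, hle]
  · simpa [Function.comp_def, pmul_mono_apply, MemH2] using hf

/-- The element `z^a w^b f` of `H²(𝔻²)`, where `ab = (a, b)`. -/
def MemH2.monoMul {f : Coef} (hf : MemH2 f) (ab : ℕ × ℕ) : HardySpace :=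
  ⟨pmul (mono ab) f, memH2_iff_memℓp.1 (hf.pmul_mono ab)⟩

lemma MemH2.coe_sum_smul_monoMul {f : Coef} (hf : MemH2 f) {s : Finset (ℕ × ℕ)} {p : Coef}
    (hp : Function.support p ⊆ s) :
    ((∑ ab ∈ s, p ab • hf.monoMul ab : HardySpace) : Coef) = pmul p f := by
  rw [pmul_eq_sum_smul_pmul_mono hp, lp.coeFn_sum]
  rfl

lemma coe_single_eq_oneH : ((lp.single 2 (0, 0) 1 : HardySpace) : Coef) = oneH := by
  ext jk
  simp [oneH, Pi.single_apply]

lemma MemH2.inner_monoMul_single {f : Coef} (hf : MemH2 f) (ab : ℕ × ℕ) :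
    inner ℂ (hf.monoMul ab) (lp.single 2 (0, 0) 1) =
      starRingEnd ℂ (f (0, 0)) * starRingEnd ℂ (mono ab (0, 0)) := by
  simp [lp.inner_single_right, MemH2.monoMul, pmul_apply_zero, mul_comm]

lemma MemH2.Hnorm_pmul_sub_oneH {f : Coef} (hf : MemH2 f) {s : Finset (ℕ × ℕ)} {p : Coef}
    (hp : Function.support p ⊆ s) :
    Hnorm (pmul p f - oneH) = ‖lp.single 2 (0, 0) 1 - ∑ ab ∈ s, p ab • hf.monoMul ab‖ := by
  rw [norm_sub_rev, HardySpace.norm_eq_Hnorm, lp.coeFn_sub, hf.coe_sum_smul_monoMul hp,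
    coe_single_eq_oneH]

end HardySpace

section OptimalApproximants

variable {f g p q : Coef} {n : ℕ}

lemma IsOPA.inner_monoMul_sum_smul (hp : IsOPA f n p) (hf : MemH2 f) {ab : ℕ × ℕ}
    (hab : ab ∈ chiFinset n) :
    inner ℂ (hf.monoMul ab) (∑ cd ∈ chiFinset n, p cd • hf.monoMul cd) =
      starRingEnd ℂ (f (0, 0)) * starRingEnd ℂ (mono ab (0, 0)) := by
  rw [← hf.inner_monoMul_single]
  refine inner_sum_smul_eq_inner_of_forall_norm_sub_le (fun c => ?_) hab
  let r : Coef := Set.indicator (chiFinset n) c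
  have hr : Function.support r ⊆ chiFinset n := Set.support_indicator_subset
  have hsum : ∑ cd ∈ chiFinset n, c cd • hf.monoMul cd =
      ∑ cd ∈ chiFinset n, r cd • hf.monoMul cd :=
    Finset.sum_congr rfl fun cd hcd => by
      congr 1
      exact (Set.indicator_of_mem (Finset.mem_coe.2 hcd) c).symm
  rw [hsum, ← hf.Hnorm_pmul_sub_oneH (inPn_iff_support_subset.1 hp.1),
    ← hf.Hnorm_pmul_sub_oneH hr]
  exact hp.2 r (inPn_iff_support_subset.2 hr)

lemma inPn.smul_sub_smul (hp : inPn n p) (hq : inPn n q) (a b : ℂ) :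
    inPn n (a • p - b • q) := by
  intro ab h
  by_cases hpab : p ab = 0
  · exact hq ab fun hqab => h (by simp [hpab, hqab])
  · exact hp ab hpab

lemma inner_monoMul_eq_of_Hinner_eq (hf : MemH2 f) (hg : MemH2 g)
    (hGram : ∀ j ≤ n, ∀ k ≤ n,
      Hinner (pmul (mono (chi j)) f) (pmul (mono (chi k)) f) =
        Hinner (pmul (mono (chi j)) g) (pmul (mono (chi k)) g)) :
    ∀ ab ∈ chiFinset n, ∀ cd ∈ chiFinset n,
      inner ℂ (hf.monoMul ab) (hf.monoMul cd) = inner ℂ (hg.monoMul ab) (hg.monoMul cd) := by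
  simp only [mem_chiFinset]
  rintro _ ⟨j, hj, rfl⟩ _ ⟨k, hk, rfl⟩
  rw [HardySpace.inner_eq_Hinner, HardySpace.inner_eq_Hinner]
  exact hGram k hk j hj

lemma IsOPA.pmul_smul_sub_smul_eq_zero (hp : IsOPA f n p) (hq : IsOPA g n q)
    (hf : MemH2 f) (hg : MemH2 g)
    (hGram : ∀ j ≤ n, ∀ k ≤ n,
      Hinner (pmul (mono (chi j)) f) (pmul (mono (chi k)) f) =
        Hinner (pmul (mono (chi j)) g) (pmul (mono (chi k)) g)) :
    pmul (starRingEnd ℂ (g (0, 0)) • p - starRingEnd ℂ (f (0, 0)) • q) f = 0 := by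
  have hr := hp.1.smul_sub_smul hq.1 (starRingEnd ℂ (g (0, 0))) (starRingEnd ℂ (f (0, 0)))
  rw [← hf.coe_sum_smul_monoMul (inPn_iff_support_subset.1 hr),
    sum_smul_eq_zero_of_inner_eq_zero, lp.coeFn_zero]
  intro ab hab
  have hGram' := inner_sum_smul_eq_of_inner_eq (inner_monoMul_eq_of_Hinner_eq hf hg hGram) q hab
  simp only [Pi.sub_apply, Pi.smul_apply, sub_smul, smul_assoc, Finset.sum_sub_distrib,
    ← Finset.smul_sum, inner_sub_right, inner_smul_right]
  rw [hGram', hp.inner_monoMul_sum_smul hf hab, hq.inner_monoMul_sum_smul hg hab]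
  ring

theorem statement3_general (hf : MemH2 f) (hg : MemH2 g)
    (hGram : ∀ j ≤ n, ∀ k ≤ n,
      Hinner (pmul (mono (chi j)) f) (pmul (mono (chi k)) f) =
        Hinner (pmul (mono (chi j)) g) (pmul (mono (chi k)) g))
    (hp : IsOPA f n p) (hq : IsOPA g n q) :
    starRingEnd ℂ (g (0, 0)) • p = starRingEnd ℂ (f (0, 0)) • q := by
  have hGram' := fun j hj k hk => (hGram j hj k hk).symm
  rcases pmul_eq_zero_iff.1 (hp.pmul_smul_sub_smul_eq_zero hq hf hg hGram) with h | rfl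
  · exact sub_eq_zero.1 h
  rcases pmul_eq_zero_iff.1 (hq.pmul_smul_sub_smul_eq_zero hp hg hf hGram') with h | rfl
  · exact (sub_eq_zero.1 h).symm
  · simp

end OptimalApproximants

/-- If `f, g ∈ H²(𝔻²)` are nonzero at the origin and have the same Gram data
`⟨χ_j f, χ_k f⟩ = ⟨χ_j g, χ_k g⟩` for `0 ≤ j, k ≤ n`, then `p_n*[f] = c · p_n*[g]` for some
constant `c`. -/
theorem statement3 (f g : Coef) (hf : MemH2 f) (hg : MemH2 g)
    (hf0 : f (0, 0) ≠ 0) (hg0 : g (0, 0) ≠ 0) (n : ℕ)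
    (hGram : ∀ j ≤ n, ∀ k ≤ n,
      Hinner (pmul (mono (chi j)) f) (pmul (mono (chi k)) f) =
        Hinner (pmul (mono (chi j)) g) (pmul (mono (chi k)) g))
    (p q : Coef) (hp : IsOPA f n p) (hq : IsOPA g n q) :
    ∃ c : ℂ, p = c • q := by
  have hg0' : starRingEnd ℂ (g (0, 0)) ≠ 0 := (map_ne_zero _).2 hg0
  exact ⟨(starRingEnd ℂ (g (0, 0)))⁻¹ * starRingEnd ℂ (f (0, 0)), by
    rw [mul_smul, ← statement3_general hf hg hGram hp hq, inv_smul_smul₀ hg0']⟩
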